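/- Spatial fixed point integration identity. Let f, g ∈ Ψ (not necessarily interpolating) and let ω be an even averaging kernel. Let h_g be any nondecreasing function on [(f⊗ω)(−∞), (f⊗ω)(+∞)] such that g(x) ∈ [h_g((f⊗ω)(x)−), h_g((f⊗ω)(x)+)] for all x ∈ ℝ, and let h_f be any nondecreasing function on [(g⊗ω)(−∞), (g⊗ω)(+∞)] such that f(x) ∈ [h_f((g⊗ω)(x)−), h_f((g⊗ω)(x)+)] for all x ∈ ℝ (such functions exist and are unique up to sets of measure zero). Then for all x₁, x₂ ∈ ℝ: ∫_{g(−∞)}^{g(x₁+)} h_g⁻¹(u) du + ∫_{f(−∞)}^{f(x₂+)} h_f⁻¹(v) dv − f(x₂+)·g(x₁+) + f(−∞)·g(−∞) = Ξ(ω; f, g; x₁, x₂). -/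

import Mathlib

open MeasureTheory Filter Set

noncomputable section

/-- Convolution `(f ⊗ ω)(x) = ∫ y, f y · ω (x − y)`. -/
def conv (f ω : ℝ → ℝ) (x : ℝ) : ℝ := ∫ y : ℝ, f y * ω (x - y)

/-- `ω` is an averaging kernel: even, nonnegative, of bounded variation, integrating to 1. -/
def IsAveragingKernel (ω : ℝ → ℝ) : Prop :=
  (∀ x, ω (-x) = ω x) ∧ (∀ x, 0 ≤ ω x) ∧ BoundedVariationOn ω Set.univ ∧
    MeasureTheory.Integrable ω ∧ (∫ x : ℝ, ω x) = 1

/-- The essential supremum `‖ω‖∞` of a kernel, as a real number. -/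
def kerSup (ω : ℝ → ℝ) : ℝ := (eLpNorm ω ⊤ MeasureTheory.volume).toReal

/-- `ω` is regular: for some `W ∈ (0,∞]`, it vanishes outside `[−W, W]` and is
positive on `(−W, W)` (the case `W = ∞` being that `ω` is everywhere positive). -/
def IsRegularKernel (ω : ℝ → ℝ) : Prop :=
  (∀ x, 0 < ω x) ∨
    ∃ W : ℝ, 0 < W ∧ (∀ x, W < |x| → ω x = 0) ∧ (∀ x, |x| < W → 0 < ω x)

/-- Membership in `𝒳`: nondecreasing self-maps of `[0,1]`. -/
def MemX (h : ℝ → ℝ) : Prop :=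
  MonotoneOn h (Icc 0 1) ∧ MapsTo h (Icc 0 1) (Icc 0 1)

/-- Left limit `h(u−)` of `h ∈ 𝒳` at `u ∈ [0,1]`, with the convention `h(0−) = 0`. -/
def lm (h : ℝ → ℝ) (u : ℝ) : ℝ := if u ≤ 0 then 0 else sSup (h '' Ico 0 u)

/-- Right limit `h(u+)` of `h ∈ 𝒳` at `u ∈ [0,1]`, with the convention `h(1+) = 1`. -/
def rm (h : ℝ → ℝ) (u : ℝ) : ℝ := if 1 ≤ u then 1 else sInf (h '' Ioc u 1)

/-- A canonical generalized inverse of `h ∈ 𝒳` (any valid inverse has the same integrals,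
so the potential below is unambiguous). -/
def Xinv (h : ℝ → ℝ) (v : ℝ) : ℝ := sInf ({1} ∪ {u ∈ Icc (0:ℝ) 1 | v ≤ h u})

/-- The potential `Φ(hf, hg; u, v) = ∫₀ᵘ hg⁻¹ + ∫₀ᵛ hf⁻¹ − u·v`. -/
def Pot (hf hg : ℝ → ℝ) (u v : ℝ) : ℝ :=
  (∫ x in (0:ℝ)..u, Xinv hg x) + (∫ x in (0:ℝ)..v, Xinv hf x) - u * v

/-- `A(hf, hg) = Φ(hf, hg; 1, 1)`. -/
def Agap (hf hg : ℝ → ℝ) : ℝ := Pot hf hg 1 1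

/-- `(u,v)` is a crossing point of `(hf, hg)`:
`u ∈ [hg(v−), hg(v+)]` and `v ∈ [hf(u−), hf(u+)]`. -/
def IsCrossing (hf hg : ℝ → ℝ) (u v : ℝ) : Prop :=
  u ∈ Icc (0:ℝ) 1 ∧ v ∈ Icc (0:ℝ) 1 ∧
    u ∈ Icc (lm hg v) (rm hg v) ∧ v ∈ Icc (lm hf u) (rm hf u)

/-- The strictly positive gap condition: there is a nontrivial crossing point, and every
nontrivial crossing point satisfies `Φ(hf, hg; u, v) > max {0, A(hf, hg)}`. -/
def StrictPosGap (hf hg : ℝ → ℝ) : Prop :=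
  (∃ u v, IsCrossing hf hg u v ∧ ¬(u = 0 ∧ v = 0) ∧ ¬(u = 1 ∧ v = 1)) ∧
    ∀ u v, IsCrossing hf hg u v → ¬(u = 0 ∧ v = 0) → ¬(u = 1 ∧ v = 1) →
      max 0 (Agap hf hg) < Pot hf hg u v

/-- Membership in `Ψ`: nondecreasing functions `ℝ → [0,1]`. -/
def MemPsi (f : ℝ → ℝ) : Prop := Monotone f ∧ ∀ x, f x ∈ Icc (0:ℝ) 1

/-- `f` is `(a,b)`-interpolating: limits `a` at `−∞` and `b` at `+∞`. -/
def Interpolates (f : ℝ → ℝ) (a b : ℝ) : Prop :=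
  Filter.Tendsto f Filter.atBot (nhds a) ∧ Filter.Tendsto f Filter.atTop (nhds b)

/-- Right limit `f(x+)` of a nondecreasing bounded function. -/
def rlim (f : ℝ → ℝ) (x : ℝ) : ℝ := sInf (f '' Ioi x)

/-- Left limit `f(x−)` of a nondecreasing bounded function. -/
def llim (f : ℝ → ℝ) (x : ℝ) : ℝ := sSup (f '' Iio x)

/-- `f(−∞)`, the limit at `−∞` of a nondecreasing bounded function. -/
def limBot (f : ℝ → ℝ) : ℝ := sInf (Set.range f)

/-- `f(+∞)`, the limit at `+∞` of a nondecreasing bounded function. -/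
def limTop (f : ℝ → ℝ) : ℝ := sSup (Set.range f)

/-- The Lebesgue–Stieltjes measure associated with a (monotone) function. -/
def stieltjesOf (f : ℝ → ℝ) : Measure ℝ :=
  haveI := Classical.dec (Monotone f)
  if h : Monotone f then h.stieltjesFunction.measure else 0

/-- Oriented Lebesgue–Stieltjes integral `∫_{(a,b]} φ df`, with the convention
`∫_{(a,b]} = −∫_{(b,a]}` when `b < a`. -/
def sInteg (f : ℝ → ℝ) (φ : ℝ → ℝ) (a b : ℝ) : ℝ :=
  if a ≤ b then ∫ y in Ioc a b, φ y ∂(stieltjesOf f)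
  else - ∫ y in Ioc b a, φ y ∂(stieltjesOf f)

/-- `Ξ(ω; f, g; x₁, x₂)`. -/
def Xi (ω f g : ℝ → ℝ) (x₁ x₂ : ℝ) : ℝ :=
  (∫ x in Ioi (0:ℝ), ω x * sInteg f (fun y => rlim g x₁ - g (y - x)) x₂ (x₁ + x)) +
    (∫ x in Ioi (0:ℝ), ω x * sInteg g (fun y => rlim f x₂ - f (y - x)) x₁ (x₂ + x))

/-- Generalized inverse of a monotone function on `ℝ`. -/
def ginv (h : ℝ → ℝ) (v : ℝ) : ℝ := sInf {u | v ≤ h u}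


namespace SFP

lemma rlim_eq {f : ℝ → ℝ} (hf : Monotone f) (x : ℝ) : rlim f x = hf.stieltjesFunction x := by
  rw [hf.stieltjesFunction_eq, hf.rightLim_eq_sInf]; rfl

lemma st_eq {f : ℝ → ℝ} (hf : Monotone f) : stieltjesOf f = hf.stieltjesFunction.measure := by
  unfold stieltjesOf; simp [hf]

lemma le_rlim {f : ℝ → ℝ} (hf : Monotone f) (x : ℝ) : f x ≤ rlim f x := by
  refine le_csInf ((nonempty_Ioi).image f) ?_
  rintro _ ⟨y, hy, rfl⟩
  exact hf (le_of_lt hy)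

lemma rlim_le {f : ℝ → ℝ} (hf : Monotone f) {x y : ℝ} (h : x < y) : rlim f x ≤ f y := by
  refine csInf_le ⟨f x, ?_⟩ ⟨y, h, rfl⟩
  rintro _ ⟨y, hy, rfl⟩
  exact hf (le_of_lt hy)

lemma le_llim {f : ℝ → ℝ} (hf : Monotone f) {x y : ℝ} (h : y < x) : f y ≤ llim f x := by
  refine le_csSup ⟨f x, ?_⟩ ⟨y, h, rfl⟩
  rintro _ ⟨y, hy, rfl⟩
  exact hf (le_of_lt hy)

lemma bddB {f : ℝ → ℝ} (hf : MemPsi f) : BddBelow (range f) :=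
  ⟨0, by rintro _ ⟨y, rfl⟩; exact (hf.2 y).1⟩

lemma bddA {f : ℝ → ℝ} (hf : MemPsi f) : BddAbove (range f) :=
  ⟨1, by rintro _ ⟨y, rfl⟩; exact (hf.2 y).2⟩

lemma limBot_le {f : ℝ → ℝ} (hf : MemPsi f) (x : ℝ) : limBot f ≤ f x :=
  csInf_le (bddB hf) ⟨x, rfl⟩

lemma tendsto_bot {f : ℝ → ℝ} (hf : MemPsi f) :
    Tendsto (hf.1.stieltjesFunction) atBot (nhds (limBot f)) := by
  have h1 : Tendsto f atBot (nhds (limBot f)) := tendsto_atBot_ciInf hf.1 (bddB hf)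
  have h2 : Tendsto (fun x => f (x + 1)) atBot (nhds (limBot f)) :=
    h1.comp (tendsto_atBot_add_const_right _ _ tendsto_id)
  refine tendsto_of_tendsto_of_tendsto_of_le_of_le h1 h2 ?_ ?_
  · intro x; simp only [← rlim_eq]; exact le_rlim hf.1 x
  · intro x; simp only [← rlim_eq]; exact rlim_le hf.1 (by linarith)

lemma tendsto_top {f : ℝ → ℝ} (hf : MemPsi f) :
    Tendsto (hf.1.stieltjesFunction) atTop (nhds (limTop f)) := by
  have h1 : Tendsto f atTop (nhds (limTop f)) := tendsto_atTop_ciSup hf.1 (bddA hf)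
  have h2 : Tendsto (fun x => f (x + 1)) atTop (nhds (limTop f)) :=
    h1.comp (tendsto_atTop_add_const_right _ _ tendsto_id)
  refine tendsto_of_tendsto_of_tendsto_of_le_of_le h1 h2 ?_ ?_
  · intro x; simp only [← rlim_eq]; exact le_rlim hf.1 x
  · intro x; simp only [← rlim_eq]; exact rlim_le hf.1 (by linarith)

lemma st_fin {f : ℝ → ℝ} (hf : MemPsi f) : IsFiniteMeasure (stieltjesOf f) := by
  rw [st_eq hf.1]
  exact StieltjesFunction.isFiniteMeasure _ (tendsto_bot hf) (tendsto_top hf)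

lemma st_Iic {f : ℝ → ℝ} (hf : MemPsi f) (x : ℝ) :
    stieltjesOf f (Iic x) = ENNReal.ofReal (rlim f x - limBot f) := by
  rw [st_eq hf.1, StieltjesFunction.measure_Iic _ (tendsto_bot hf), rlim_eq hf.1]

lemma limBot_le_rlim {f : ℝ → ℝ} (hf : MemPsi f) (x : ℝ) : limBot f ≤ rlim f x :=
  (limBot_le hf x).trans (le_rlim hf.1 x)

lemma st_Iic_real {f : ℝ → ℝ} (hf : MemPsi f) (x : ℝ) :
    (stieltjesOf f).real (Iic x) = rlim f x - limBot f := by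
  rw [Measure.real, st_Iic hf, ENNReal.toReal_ofReal]
  linarith [limBot_le_rlim hf x]

lemma rlim_cont {f : ℝ → ℝ} (hf : Monotone f) {x : ℝ} (hx : ContinuousAt f x) :
    rlim f x = f x := by
  refine le_antisymm ?_ (le_rlim hf x)
  refine ge_of_tendsto (hx.tendsto.mono_left (nhdsWithin_le_nhds (s := Ioi x))) ?_
  filter_upwards [self_mem_nhdsWithin] with y hy using rlim_le hf hy

lemma st_single {f : ℝ → ℝ} (hf : MemPsi f) {x : ℝ} (hx : ContinuousAt f x) :
    stieltjesOf f {x} = 0 := by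
  rw [st_eq hf.1, StieltjesFunction.measure_singleton, ← rlim_eq, rlim_cont hf.1 hx]
  apply ENNReal.ofReal_of_nonpos
  have : f x ≤ Function.leftLim (hf.1.stieltjesFunction) x := by
    refine le_of_tendsto (hx.tendsto.mono_left (nhdsWithin_le_nhds (s := Iio x))) ?_
    filter_upwards [self_mem_nhdsWithin] with y hy
    refine (le_rlim hf.1 y).trans ?_
    rw [rlim_eq hf.1]
    exact (hf.1.stieltjesFunction.mono).le_leftLim hy
  linarith

lemma st_Iio_real {f : ℝ → ℝ} (hf : MemPsi f) {x : ℝ} (hx : ContinuousAt f x) :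
    (stieltjesOf f).real (Iio x) = f x - limBot f := by
  rw [← rlim_cont hf.1 hx, ← st_Iic_real hf, Measure.real, Measure.real]
  congr 1
  refine measure_congr ?_
  exact Iio_ae_eq_Iic' (st_single hf hx)

lemma meas_cond (μ ν : Measure ℝ) [IsFiniteMeasure μ] [IsFiniteMeasure ν] (t x : ℝ) :
    (∫ y in Iic t, μ.real (Iic (y + x)) ∂ν) + (∫ z in Iic (t + x), ν.real (Iio (z - x)) ∂μ) =
      μ.real (Iic (t + x)) * ν.real (Iic t) := by
  have e1 : (∫ y in Iic t, μ.real (Iic (y + x)) ∂ν) =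
      (ν.prod μ).real {p : ℝ × ℝ | p.1 ≤ t ∧ p.2 ≤ p.1 + x} := by
    have hm : MeasurableSet {p : ℝ × ℝ | p.1 ≤ t ∧ p.2 ≤ p.1 + x} :=
      (measurableSet_le measurable_fst measurable_const).inter
        (measurableSet_le measurable_snd (measurable_fst.add_const x))
    simp only [Measure.real]
    rw [integral_toReal, Measure.prod_apply hm, ← lintegral_indicator measurableSet_Iic]
    · congr 1
      refine lintegral_congr fun y => ?_
      by_cases hy : y ≤ t
      · simp [hy, Iic_def]
      · simp [hy]
    · exact (Monotone.measurable (fun a b hab => measure_mono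
        (Iic_subset_Iic.2 (by linarith)))).aemeasurable
    · exact ae_of_all _ fun y => measure_lt_top _ _
  have e2 : (∫ z in Iic (t + x), ν.real (Iio (z - x)) ∂μ) =
      (ν.prod μ).real {p : ℝ × ℝ | p.2 ≤ t + x ∧ p.1 < p.2 - x} := by
    have hm : MeasurableSet {p : ℝ × ℝ | p.2 ≤ t + x ∧ p.1 < p.2 - x} :=
      (measurableSet_le measurable_snd measurable_const).inter
        (measurableSet_lt measurable_fst (measurable_snd.sub_const x))
    simp only [Measure.real]
    rw [integral_toReal, Measure.prod_apply_symm hm, ← lintegral_indicator measurableSet_Iic]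
    · congr 1
      refine lintegral_congr fun y => ?_
      by_cases hy : y ≤ t + x
      · simp [hy, Iio_def]
      · simp [hy]
    · exact (Monotone.measurable (fun a b hab => measure_mono
        (Iio_subset_Iio (by linarith)))).aemeasurable
    · exact ae_of_all _ fun y => measure_lt_top _ _
  rw [e1, e2, ← measureReal_union]
  · have : {p : ℝ × ℝ | p.1 ≤ t ∧ p.2 ≤ p.1 + x} ∪ {p : ℝ × ℝ | p.2 ≤ t + x ∧ p.1 < p.2 - x}
        = Iic t ×ˢ Iic (t + x) := by
      ext ⟨a, b⟩
      simp only [mem_union, mem_ofPred_eq, mem_prod, mem_Iic]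
      constructor
      · rintro (⟨h1, h2⟩ | ⟨h1, h2⟩) <;> constructor <;> linarith
      · rintro ⟨h1, h2⟩
        by_cases h : b ≤ a + x
        · exact Or.inl ⟨h1, h⟩
        · exact Or.inr ⟨h2, by linarith⟩
    rw [this, measureReal_prod_prod, mul_comm]
  · rw [Set.disjoint_left]
    rintro ⟨a, b⟩ ⟨h1, h2⟩ ⟨h3, h4⟩
    simp only at *
    linarith
  · exact (measurableSet_le measurable_snd measurable_const).inter
        (measurableSet_lt measurable_fst (measurable_snd.sub_const x))

lemma bdd_int {f : ℝ → ℝ} (hf : MemPsi f) (μ : Measure ℝ) [IsFiniteMeasure μ] {φ : ℝ → ℝ}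
    (hφ : Measurable φ) : Integrable (fun y => f (φ y)) μ := by
  refine Integrable.of_bound (C := 1) (hf.1.measurable.comp hφ).aestronglyMeasurable
    (ae_of_all _ fun y => ?_)
  rw [Real.norm_eq_abs, abs_of_nonneg (hf.2 _).1]
  exact (hf.2 _).2

lemma parts {f g : ℝ → ℝ} (hf : MemPsi f) (hg : MemPsi g) (t x : ℝ)
    (hx : ∀ y, ContinuousAt f (y + x) ∨ ContinuousAt g y) :
    (∫ y in Iic t, f (y + x) ∂(stieltjesOf g)) + (∫ z in Iic (t + x), g (z - x) ∂(stieltjesOf f)) =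
      rlim f (t + x) * rlim g t - limBot f * limBot g := by
  have := st_fin hf
  have := st_fin hg
  have a1 : ∀ᵐ y ∂(stieltjesOf g), f (y + x) = limBot f + (stieltjesOf f).real (Iic (y + x)) := by
    rw [ae_iff]
    have hc : {y | ¬ ContinuousAt f (y + x)}.Countable :=
      hf.1.countable_not_continuousAt.preimage (add_left_injective x)
    refine measure_mono_null (t := {y | ¬ ContinuousAt f (y + x)}) ?_ ?_
    · intro y hy hc
      apply hy
      rw [st_Iic_real hf, rlim_cont hf.1 hc]; ring
    · rw [← biUnion_of_singleton {y | ¬ ContinuousAt f (y + x)}, measure_biUnion_null_iff hc]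
      intro y hy
      exact st_single hg ((hx y).resolve_left hy)
  have a2 : ∀ᵐ z ∂(stieltjesOf f), g (z - x) = limBot g + (stieltjesOf g).real (Iio (z - x)) := by
    rw [ae_iff]
    have hc : {z | ¬ ContinuousAt g (z - x)}.Countable :=
      hg.1.countable_not_continuousAt.preimage (sub_left_injective (b := x))
    refine measure_mono_null (t := {z | ¬ ContinuousAt g (z - x)}) ?_ ?_
    · intro y hy hc
      apply hy
      rw [st_Iio_real hg hc]; ring
    · rw [← biUnion_of_singleton {z | ¬ ContinuousAt g (z - x)}, measure_biUnion_null_iff hc]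
      intro z hz
      have := (hx (z - x)).resolve_right hz
      rw [sub_add_cancel] at this
      exact st_single hf this
  have m1 : Measurable fun y => (stieltjesOf f).real (Iic (y + x)) :=
    Monotone.measurable fun a b hab => measureReal_mono (Iic_subset_Iic.2 (by linarith))
  have m2 : Measurable fun y => (stieltjesOf g).real (Iio (y - x)) :=
    Monotone.measurable fun a b hab => measureReal_mono (Iio_subset_Iio (by linarith))
  have i1 : Integrable (fun y => (stieltjesOf f).real (Iic (y + x)))
      ((stieltjesOf g).restrict (Iic t)) := by
    refine Integrable.of_bound (C := (stieltjesOf f).real univ) m1.aestronglyMeasurable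
      (ae_of_all _ fun y => ?_)
    rw [Real.norm_eq_abs, abs_of_nonneg measureReal_nonneg]
    exact measureReal_mono (subset_univ _)
  have i2 : Integrable (fun y => (stieltjesOf g).real (Iio (y - x)))
      ((stieltjesOf f).restrict (Iic (t + x))) := by
    refine Integrable.of_bound (C := (stieltjesOf g).real univ) m2.aestronglyMeasurable
      (ae_of_all _ fun y => ?_)
    rw [Real.norm_eq_abs, abs_of_nonneg measureReal_nonneg]
    exact measureReal_mono (subset_univ _)
  rw [integral_congr_ae (ae_restrict_of_ae a1), integral_congr_ae (ae_restrict_of_ae a2),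
    integral_add (integrable_const _) i1, integral_add (integrable_const _) i2]
  have := meas_cond (stieltjesOf f) (stieltjesOf g) t x
  simp only [integral_const, measureReal_restrict_apply_univ, smul_eq_mul]
  rw [st_Iic_real hf, st_Iic_real hg] at *
  linear_combination this

lemma sInteg_eq {f : ℝ → ℝ} (hf : MemPsi f) {φ : ℝ → ℝ} (hφ : Integrable φ (stieltjesOf f))
    (a b : ℝ) : sInteg f φ a b =
      (∫ y in Iic b, φ y ∂(stieltjesOf f)) - ∫ y in Iic a, φ y ∂(stieltjesOf f) := by
  rw [intervalIntegral.integral_Iic_sub_Iic hφ.integrableOn hφ.integrableOn]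
  unfold sInteg
  split_ifs with h
  · rw [intervalIntegral.integral_of_le h]
  · rw [intervalIntegral.integral_of_ge (le_of_not_ge h)]

lemma conv_eq (f ω : ℝ → ℝ) (x : ℝ) : conv f ω x = ∫ z, f (x - z) * ω z := by
  rw [← integral_sub_left_eq_self _ volume x]
  simp [conv]

lemma conv_integrable {f ω : ℝ → ℝ} (hf : MemPsi f) (hω : Integrable ω) {φ : ℝ → ℝ}
    (hφ : Measurable φ) (s : Set ℝ) : IntegrableOn (fun z => f (φ z) * ω z) s := by
  refine (hω.bdd_mul (c := 1) (hf.1.measurable.comp hφ).aestronglyMeasurable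
    (ae_of_all _ fun y => ?_)).integrableOn
  simp only [Function.comp]
  rw [Real.norm_eq_abs, abs_of_nonneg (hf.2 _).1]
  exact (hf.2 _).2

lemma conv_half {f ω : ℝ → ℝ} (hf : MemPsi f) (hω : IsAveragingKernel ω) (y : ℝ) :
    conv f ω y = ∫ x in Ioi (0:ℝ), ω x * (f (y - x) + f (y + x)) := by
  obtain ⟨hev, -, -, hint, -⟩ := hω
  rw [conv_eq, ← intervalIntegral.integral_Iic_add_Ioi (b := 0)
    (conv_integrable hf hint (by fun_prop) _) (conv_integrable hf hint (by fun_prop) _)]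
  rw [← neg_zero, ← integral_comp_neg_Ioi, neg_zero, ← integral_add]
  · refine integral_congr_ae (ae_of_all _ fun x => ?_)
    simp only [hev, sub_neg_eq_add]; ring
  · simp only [hev, sub_neg_eq_add]
    exact conv_integrable hf hint (by fun_prop) _
  · exact conv_integrable hf hint (by fun_prop) _

lemma conv_cont {f ω : ℝ → ℝ} (hf : MemPsi f) (hω : IsAveragingKernel ω) :
    Continuous (conv f ω) := by
  have : conv f ω = fun x => ∫ z, f (x - z) * ω z := funext (conv_eq f ω)
  rw [this, continuous_iff_continuousAt]
  obtain ⟨hev, h0, -, hint, -⟩ := hω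
  intro x
  refine continuousAt_of_dominated (bound := ω) ?_ ?_ hint ?_
  · refine Eventually.of_forall fun x => ?_
    have := conv_integrable hf hint (φ := fun z => x - z) (by fun_prop) univ
    rw [integrableOn_univ] at this
    exact this.1
  · refine Eventually.of_forall fun x => ae_of_all _ fun z => ?_
    rw [norm_mul, Real.norm_eq_abs, Real.norm_eq_abs, abs_of_nonneg (hf.2 _).1,
      abs_of_nonneg (h0 _)]
    exact mul_le_of_le_one_left (h0 _) (hf.2 _).2
  · have hc : {z | ¬ ContinuousAt f (x - z)}.Countable :=
      hf.1.countable_not_continuousAt.preimage (sub_right_injective (b := x))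
    filter_upwards [hc.ae_notMem volume] with z hz
    simp only [not_not] at hz
    refine ContinuousAt.mul ?_ continuousAt_const
    exact ContinuousAt.comp (f := fun x => x - z) (g := f) hz (by fun_prop)

lemma conv_mono {f ω : ℝ → ℝ} (hf : MemPsi f) (hω : IsAveragingKernel ω) :
    Monotone (conv f ω) := by
  intro x y hxy
  rw [conv_eq, conv_eq]
  have hint := hω.2.2.2.1
  have h1 := conv_integrable hf hint (φ := fun z => x - z) (by fun_prop) univ
  have h2 := conv_integrable hf hint (φ := fun z => y - z) (by fun_prop) univ
  rw [integrableOn_univ] at h1 h2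
  refine integral_mono h1 h2 fun z => ?_
  exact mul_le_mul_of_nonneg_right (hf.1 (by linarith)) (hω.2.1 z)

def qf (g : ℝ → ℝ) (u : ℝ) : ℝ := sInf {x | u ≤ rlim g x}

lemma rlim_mono {g : ℝ → ℝ} (hg : Monotone g) : Monotone (rlim g) := by
  intro x y hxy
  rcases hxy.eq_or_lt with h | h
  · rw [h]
  · exact (rlim_le hg h).trans (le_rlim hg y)

lemma qf_bdd {g : ℝ → ℝ} (hg : MemPsi g) {u : ℝ} (hu : limBot g < u) :
    BddBelow {x | u ≤ rlim g x} := by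
  obtain ⟨_, ⟨y, rfl⟩, hy⟩ := exists_lt_of_csInf_lt (range_nonempty g) hu
  refine ⟨y, fun x hx => ?_⟩
  by_contra h
  have h1 := rlim_le hg.1 (not_le.1 h)
  have h2 : u ≤ rlim g x := hx
  linarith

lemma qf_le {g : ℝ → ℝ} (hg : MemPsi g) {t u : ℝ} (hu : u ∈ Ioc (limBot g) (rlim g t)) (s : ℝ) :
    qf g u ≤ s ↔ u ≤ rlim g s := by
  constructor
  · intro h
    refine le_csInf ((nonempty_Ioi).image g) ?_
    rintro _ ⟨r, hr, rfl⟩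
    obtain ⟨x, hx, hxr⟩ := exists_lt_of_csInf_lt (s := {x | u ≤ rlim g x}) ⟨t, hu.2⟩
      (lt_of_le_of_lt h hr)
    exact le_trans hx (rlim_le hg.1 hxr)
  · intro h
    exact csInf_le (qf_bdd hg hu.1) h

lemma qf_monoOn {g : ℝ → ℝ} (hg : MemPsi g) (t : ℝ) :
    MonotoneOn (qf g) (Ioc (limBot g) (rlim g t)) := by
  intro u hu v hv huv
  rw [qf_le hg hu]
  exact huv.trans ((qf_le hg hv _).1 le_rfl)

lemma qf_aem {g : ℝ → ℝ} (hg : MemPsi g) (t : ℝ) :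
    AEMeasurable (qf g) (volume.restrict (Ioc (limBot g) (rlim g t))) :=
  aemeasurable_restrict_of_monotoneOn measurableSet_Ioc (qf_monoOn hg t)

lemma qf_map {g : ℝ → ℝ} (hg : MemPsi g) (t : ℝ) :
    (volume.restrict (Ioc (limBot g) (rlim g t))).map (qf g) =
      (stieltjesOf g).restrict (Iic t) := by
  have := st_fin hg
  refine Measure.ext_of_Iic _ _ fun s => ?_
  rw [Measure.map_apply_of_aemeasurable (qf_aem hg t) measurableSet_Iic,
    Measure.restrict_apply measurableSet_Iic, Iic_inter_Iic, st_Iic hg]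
  have : (qf g ⁻¹' Iic s) =ᵐ[volume.restrict (Ioc (limBot g) (rlim g t))] Iic (rlim g s) := by
    filter_upwards [ae_restrict_mem measurableSet_Ioc] with u hu
    exact propext (qf_le hg hu s)
  have hIoc : Iic (rlim g s) ∩ Ioc (limBot g) (rlim g t) =
      Ioc (limBot g) (min (rlim g s) (rlim g t)) := by
    ext u; simp only [mem_inter_iff, mem_Iic, mem_Ioc, le_min_iff]; tauto
  rw [measure_congr this, Measure.restrict_apply measurableSet_Iic, hIoc,
    Real.volume_Ioc, (rlim_mono hg.1).map_min]

lemma ginv_eq {g h c : ℝ → ℝ} (hg : MemPsi g) (hh : Monotone h) (hc : Continuous c)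
    (H : ∀ x, g x ∈ Icc (llim h (c x)) (rlim h (c x))) {t u : ℝ}
    (hu : u ∈ Ioc (limBot g) (rlim g t)) : ginv h u = c (qf g u) := by
  have lb : ∀ w ∈ {w | u ≤ h w}, c (qf g u) ≤ w := by
    intro w hw
    by_contra hlt
    have h1 : ∀ᶠ x in nhdsWithin (qf g u) (Iio (qf g u)), w < c x :=
      (hc.continuousAt.tendsto.mono_left nhdsWithin_le_nhds).eventually_const_lt (not_le.1 hlt)
    obtain ⟨x, hx, hxq⟩ := (h1.and self_mem_nhdsWithin).exists
    have h2 : ¬ u ≤ rlim g x := by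
      rw [← qf_le hg hu]; exact not_le.2 hxq
    have h3 := le_llim hh hx
    have h4 := (H x).1
    have h5 := le_rlim hg.1 x
    have h6 : u ≤ h w := hw
    exact h2 (by linarith)
  have ub : ∀ w, c (qf g u) < w → u ≤ h w := by
    intro w hw
    have h1 : ∀ᶠ x in nhdsWithin (qf g u) (Ioi (qf g u)), c x < w :=
      (hc.continuousAt.tendsto.mono_left nhdsWithin_le_nhds).eventually_lt_const hw
    obtain ⟨x, hx, hxq⟩ := (h1.and self_mem_nhdsWithin).exists
    have h2 := (qf_le hg hu (qf g u)).1 le_rfl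
    have h3 := rlim_le hg.1 hxq
    have h4 := (H x).2
    have h5 := rlim_le hh hx
    linarith
  refine le_antisymm (le_of_forall_gt_imp_ge_of_dense fun w hw => csInf_le ⟨_, lb⟩ (ub w hw)) ?_
  exact le_csInf ⟨c (qf g u) + 1, ub _ (by linarith)⟩ lb

lemma int_ginv {g h c : ℝ → ℝ} (hg : MemPsi g) (hh : Monotone h) (hc : Continuous c)
    (H : ∀ x, g x ∈ Icc (llim h (c x)) (rlim h (c x))) (t : ℝ) :
    (∫ u in (limBot g)..(rlim g t), ginv h u) = ∫ y in Iic t, c y ∂(stieltjesOf g) := by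
  rw [intervalIntegral.integral_of_le (limBot_le_rlim hg t), ← qf_map hg t,
    integral_map (qf_aem hg t) hc.aestronglyMeasurable]
  exact setIntegral_congr_fun measurableSet_Ioc fun u hu => ginv_eq hg hh hc H hu

lemma fub {f ω : ℝ → ℝ} (hf : MemPsi f) (hω : Integrable ω) (μ : Measure ℝ) [IsFiniteMeasure μ]
    {φ : ℝ × ℝ → ℝ} (hφ : Measurable φ) :
    Integrable (fun p : ℝ × ℝ => ω p.1 * f (φ p)) ((volume.restrict (Ioi 0)).prod μ) := by
  have h1 : Integrable (fun p : ℝ × ℝ => ω p.1) ((volume.restrict (Ioi 0)).prod μ) :=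
    hω.integrableOn.comp_fst μ
  have := h1.bdd_mul (c := 1) (f := fun p => f (φ p)) (hf.1.measurable.comp hφ).aestronglyMeasurable
    (ae_of_all _ fun y => by
      rw [Real.norm_eq_abs, abs_of_nonneg (hf.2 _).1]
      exact (hf.2 _).2)
  simpa only [mul_comm] using this

lemma fub_int {f ω : ℝ → ℝ} (hf : MemPsi f) (hω : Integrable ω) (μ : Measure ℝ) [IsFiniteMeasure μ]
    {φ : ℝ → ℝ → ℝ} (hφ : Measurable (Function.uncurry φ)) :
    IntegrableOn (fun x => ω x * ∫ y, f (φ x y) ∂μ) (Ioi 0) := by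
  have := (fub hf hω μ hφ).integral_prod_left
  simp only [Function.uncurry, integral_const_mul] at this
  exact this

lemma int_conv {f ω : ℝ → ℝ} (hf : MemPsi f) (hω : IsAveragingKernel ω) (μ : Measure ℝ)
    [IsFiniteMeasure μ] :
    (∫ y, conv f ω y ∂μ) = (∫ x in Ioi (0:ℝ), ω x * ∫ y, f (y - x) ∂μ) +
      ∫ x in Ioi (0:ℝ), ω x * ∫ y, f (y + x) ∂μ := by
  have hint := hω.2.2.2.1
  have m1 : Measurable (Function.uncurry fun x y : ℝ => y - x) := by
    unfold Function.uncurry; fun_prop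
  have m2 : Measurable (Function.uncurry fun x y : ℝ => y + x) := by
    unfold Function.uncurry; fun_prop
  rw [← integral_add (fub_int hf hint μ m1) (fub_int hf hint μ m2)]
  have e : (∫ y, conv f ω y ∂μ) =
      ∫ y, ∫ x in Ioi (0:ℝ), ω x * (f (y - x) + f (y + x)) ∂volume ∂μ :=
    integral_congr_ae (ae_of_all _ fun y => conv_half hf hω y)
  rw [e, ← integral_integral_swap (f := fun x y => ω x * (f (y - x) + f (y + x)))]
  · refine integral_congr_ae (ae_of_all _ fun x => ?_)
    simp only
    rw [integral_const_mul, integral_add (bdd_int hf μ (by fun_prop)) (bdd_int hf μ (by fun_prop)),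
      mul_add]
  · have := (fub hf hint μ m1).add (fub hf hint μ m2)
    refine this.congr (ae_of_all _ fun p => ?_)
    simp only [Function.uncurry, Pi.add_apply, mul_add]

lemma half {ω : ℝ → ℝ} (hω : IsAveragingKernel ω) : ∫ x in Ioi (0:ℝ), ω x = 1 / 2 := by
  obtain ⟨hev, -, -, hint, h1⟩ := hω
  rw [← intervalIntegral.integral_Iic_add_Ioi (b := 0) hint.integrableOn hint.integrableOn] at h1
  have : ∫ x in Iic (0:ℝ), ω x = ∫ x in Ioi (0:ℝ), ω x := by
    conv_lhs => rw [← neg_zero, ← integral_comp_neg_Ioi]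
    simp only [hev]
  linarith

lemma good_ae {f g : ℝ → ℝ} (hf : MemPsi f) (hg : MemPsi g) :
    ∀ᵐ x : ℝ, ∀ y, ContinuousAt f (y + x) ∨ ContinuousAt g y := by
  have hc := (hf.1.countable_not_continuousAt.prod hg.1.countable_not_continuousAt).image
    (fun p : ℝ × ℝ => p.1 - p.2)
  filter_upwards [hc.ae_notMem volume] with x hx y
  by_contra h
  push Not at h
  exact hx ⟨(y + x, y), ⟨h.1, h.2⟩, by simp⟩

lemma R_int {f g ω : ℝ → ℝ} (hf : MemPsi f) (hg : MemPsi g) (hω : IsAveragingKernel ω)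
    (x₁ x₂ : ℝ) :
    (∫ x in Ioi (0:ℝ), ω x * sInteg f (fun y => rlim g x₁ - g (y - x)) x₂ (x₁ + x)) =
      (∫ x in Ioi (0:ℝ), ω x * ∫ y in Iic x₁, f (y + x) ∂(stieltjesOf g)) +
      (∫ x in Ioi (0:ℝ), ω x * ∫ y in Iic x₂, g (y - x) ∂(stieltjesOf f)) -
      1 / 2 * (rlim f x₂ * rlim g x₁ - limBot f * limBot g) := by
  have := st_fin hf
  have := st_fin hg
  have hint := hω.2.2.2.1
  have m1 : Measurable (Function.uncurry fun x y : ℝ => y - x) := by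
    unfold Function.uncurry; fun_prop
  have m2 : Measurable (Function.uncurry fun x y : ℝ => y + x) := by
    unfold Function.uncurry; fun_prop
  have i1 := fub_int hf hint ((stieltjesOf g).restrict (Iic x₁)) m2
  have i2 := fub_int hg hint ((stieltjesOf f).restrict (Iic x₂)) m1
  rw [← half hω, ← integral_mul_const, ← integral_add i1 i2,
    ← integral_sub (by exact i1.add i2) (hint.integrableOn.mul_const _)]
  refine integral_congr_ae (ae_restrict_of_ae ?_)
  filter_upwards [good_ae hf hg] with x hx
  have hp := parts hf hg x₁ x hx
  have hb : ∀ s : Set ℝ, IntegrableOn (fun y => g (y - x)) s (stieltjesOf f) :=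
    fun s => (bdd_int hg (stieltjesOf f) (by fun_prop)).integrableOn
  have hi : Integrable (fun y => rlim g x₁ - g (y - x)) (stieltjesOf f) :=
    (integrable_const _).sub (bdd_int hg (stieltjesOf f) (by fun_prop))
  rw [sInteg_eq hf hi, integral_sub (integrable_const _) (hb _),
    integral_sub (integrable_const _) (hb _)]
  simp only [integral_const, measureReal_restrict_apply_univ, smul_eq_mul, st_Iic_real hf]
  linear_combination (-ω x) * hp

end SFP

/-- **Spatial fixed point integration identity.** -/
theorem spatial_fixed_point_integration
    (ω f g hF hG : ℝ → ℝ)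
    (hω : IsAveragingKernel ω) (hfΨ : MemPsi f) (hgΨ : MemPsi g)
    (hFmono : Monotone hF) (hGmono : Monotone hG)
    (hGc : ∀ x, g x ∈ Icc (llim hG (conv f ω x)) (rlim hG (conv f ω x)))
    (hFc : ∀ x, f x ∈ Icc (llim hF (conv g ω x)) (rlim hF (conv g ω x)))
    (x₁ x₂ : ℝ) :
    (∫ u in (limBot g)..(rlim g x₁), ginv hG u) +
      (∫ v in (limBot f)..(rlim f x₂), ginv hF v) -
      rlim f x₂ * rlim g x₁ + limBot f * limBot g = Xi ω f g x₁ x₂ := by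
  have := SFP.st_fin hfΨ
  have := SFP.st_fin hgΨ
  rw [SFP.int_ginv hgΨ hGmono (SFP.conv_cont hfΨ hω) hGc,
    SFP.int_ginv hfΨ hFmono (SFP.conv_cont hgΨ hω) hFc, SFP.int_conv hfΨ hω, SFP.int_conv hgΨ hω,
    Xi, SFP.R_int hfΨ hgΨ hω, SFP.R_int hgΨ hfΨ hω]
  ring
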